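/- arXiv:2508.18754 — 3 statements merged into one kernel-verified Lean document; each statement's English description precedes it below -/
import Mathlib

section
/- For every ν₀ ∈ (0, 1) there exist ε₀ > 0 and C(ν₀) > 0 such that for all ε ∈ (0, ε₀) and every continuously differentiable b̄₁ : [−1,1] → ℝ, setting b₁ = θ_{2,ε} b̄₁, one has Q₁(b₁) ≥ (ν₀/2) ∫_{−1}^{1} θ_{2,ε}(r)² b̄₁'(r)² dr − (C(ν₀)/ε) e^{−α/ε} ∫_{−1}^{1} θ_{2,ε}(r)² b̄₁(r)² dr. -/
open Filter MeasureTheory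

/-- `f_B(ρ) = (ρ² − a²)(ρ² − b²)(2ρ² − a² − b²)`. -/
noncomputable def fB (a b ρ : ℝ) : ℝ :=
  (ρ ^ 2 - a ^ 2) * (ρ ^ 2 - b ^ 2) * (2 * ρ ^ 2 - a ^ 2 - b ^ 2)

/-- The quadratic form `Q₁(u) = ∫_{−1}^{1} (u'(r)² + ε⁻² f_B(ρ₀(r/ε)) u(r)²) dr`, written for
a function `u` with (weak) derivative `g`. -/
noncomputable def Q1 (a b ε : ℝ) (ρ₀ u g : ℝ → ℝ) : ℝ :=
  ∫ r in (-1:ℝ)..1, ((g r) ^ 2 + (ε ^ 2)⁻¹ * fB a b (ρ₀ (r / ε)) * (u r) ^ 2)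

/-!
The function `θ(r) = ρ₀(r/ε)` solves `θ'' = ε⁻² f_B(θ) θ` and is positive, so the ground state
substitution `u = θ v` turns `Q₁(u)` into `∫ θ² v'²` plus the boundary term `[θ θ' v²]`. At `r = 1`
this term is nonnegative because `ρ₀` increases. At `r = -1` the factor `θ θ'` is
`O(ε⁻¹ e^{-α/ε})`, since the profile leaves the equilibrium `a` at the exponential rate
`√2 (b² - a²) a > α`; the trace inequality for `v(-1)²` then absorbs it into `∫ θ² v'²` and
`∫ θ² v²`.
-/

section IntervalForms

open Set Interval

variable {c d : ℝ} {v v' : ℝ → ℝ}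

lemma integral_deriv_mul_sq_add_potential {w w' V : ℝ → ℝ}
    (hw : ∀ r ∈ [[c, d]], HasDerivAt w (w' r) r)
    (hw' : ∀ r ∈ [[c, d]], HasDerivAt w' (V r * w r) r)
    (hv : ∀ r ∈ [[c, d]], HasDerivAt v (v' r) r)
    (hV : ContinuousOn V [[c, d]]) (hv' : ContinuousOn v' [[c, d]]) :
    ∫ r in c..d, ((w' r * v r + w r * v' r) ^ 2 + V r * (w r * v r) ^ 2) =
      (∫ r in c..d, w r ^ 2 * v' r ^ 2)
        + (w d * w' d * v d ^ 2 - w c * w' c * v c ^ 2) := by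
  have hwc := HasDerivAt.continuousOn hw
  have hwc' := HasDerivAt.continuousOn hw'
  have hvc := HasDerivAt.continuousOn hv
  have hflux : ∀ r ∈ [[c, d]], HasDerivAt (fun r => w r * w' r * v r ^ 2)
      ((w' r * v r + w r * v' r) ^ 2 + V r * (w r * v r) ^ 2 - w r ^ 2 * v' r ^ 2) r :=
    fun r hr => (((hw r hr).mul (hw' r hr)).mul ((hv r hr).pow 2)).congr_deriv (by
      simp only [Pi.mul_apply, Pi.pow_apply]; ring)
  have hform : IntervalIntegrable
      (fun r => (w' r * v r + w r * v' r) ^ 2 + V r * (w r * v r) ^ 2) volume c d :=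
    ContinuousOn.intervalIntegrable (by fun_prop)
  have hdirichlet : IntervalIntegrable (fun r => w r ^ 2 * v' r ^ 2) volume c d :=
    ContinuousOn.intervalIntegrable (by fun_prop)
  rw [← sub_eq_iff_eq_add', ← intervalIntegral.integral_sub hform hdirichlet]
  exact intervalIntegral.integral_eq_sub_of_hasDerivAt hflux (hform.sub hdirichlet)

lemma sub_mul_sq_left_le_integral (hcd : c ≤ d)
    (hv : ∀ r ∈ [[c, d]], HasDerivAt v (v' r) r) (hv' : ContinuousOn v' [[c, d]]) :
    (d - c) * v c ^ 2 ≤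
      2 * (∫ r in c..d, v r ^ 2) + (d - c) ^ 2 * ∫ r in c..d, v' r ^ 2 := by
  have hvc := HasDerivAt.continuousOn hv
  have hderiv : ∀ r ∈ [[c, d]], HasDerivAt (fun r => (r - d) * v r ^ 2)
      (v r ^ 2 + 2 * (r - d) * v r * v' r) r :=
    fun r hr => (((hasDerivAt_id r).sub_const d).mul ((hv r hr).pow 2)).congr_deriv (by
      simp only [id, Pi.pow_apply]; ring)
  have hint : IntervalIntegrable (fun r => v r ^ 2 + 2 * (r - d) * v r * v' r) volume c d :=
    ContinuousOn.intervalIntegrable (by fun_prop)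
  have hint_sq : IntervalIntegrable (fun r => 2 * v r ^ 2) volume c d :=
    ContinuousOn.intervalIntegrable (by fun_prop)
  have hint_deriv_sq : IntervalIntegrable (fun r => (d - c) ^ 2 * v' r ^ 2) volume c d :=
    ContinuousOn.intervalIntegrable (by fun_prop)
  have hyoung : ∀ r ∈ Icc c d,
      v r ^ 2 + 2 * (r - d) * v r * v' r ≤ 2 * v r ^ 2 + (d - c) ^ 2 * v' r ^ 2 := by
    intro r hr
    have hsq : (d - r) ^ 2 ≤ (d - c) ^ 2 :=
      pow_le_pow_left₀ (sub_nonneg.2 hr.2) (sub_le_sub_left hr.1 d) 2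
    nlinarith [sq_nonneg (v r + (d - r) * v' r), mul_le_mul_of_nonneg_right hsq (sq_nonneg (v' r))]
  calc (d - c) * v c ^ 2 = ∫ r in c..d, (v r ^ 2 + 2 * (r - d) * v r * v' r) := by
        rw [intervalIntegral.integral_eq_sub_of_hasDerivAt hderiv hint]; ring
    _ ≤ ∫ r in c..d, (2 * v r ^ 2 + (d - c) ^ 2 * v' r ^ 2) :=
        intervalIntegral.integral_mono_on hcd hint (hint_sq.add hint_deriv_sq) hyoung
    _ = _ := by
        rw [intervalIntegral.integral_add hint_sq hint_deriv_sq,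
          intervalIntegral.integral_const_mul, intervalIntegral.integral_const_mul]

lemma sq_mul_integral_sq_le_integral_mul_sq {m : ℝ} {w f : ℝ → ℝ} (hcd : c ≤ d) (hm : 0 ≤ m)
    (hmw : ∀ r ∈ Icc c d, m ≤ w r) (hw : ContinuousOn w [[c, d]]) (hf : ContinuousOn f [[c, d]]) :
    m ^ 2 * (∫ r in c..d, f r ^ 2) ≤ ∫ r in c..d, w r ^ 2 * f r ^ 2 := by
  rw [← intervalIntegral.integral_const_mul]
  refine intervalIntegral.integral_mono_on hcd
    (ContinuousOn.intervalIntegrable (by fun_prop))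
    (ContinuousOn.intervalIntegrable (by fun_prop)) fun r hr => ?_
  have := hmw r hr
  gcongr

lemma sq_mul_sub_mul_sq_left_le_integral {m : ℝ} {w : ℝ → ℝ} (hcd : c ≤ d) (hm : 0 ≤ m)
    (hmw : ∀ r ∈ Icc c d, m ≤ w r) (hw : ContinuousOn w [[c, d]])
    (hv : ∀ r ∈ [[c, d]], HasDerivAt v (v' r) r) (hv' : ContinuousOn v' [[c, d]]) :
    m ^ 2 * ((d - c) * v c ^ 2) ≤
      2 * (∫ r in c..d, w r ^ 2 * v r ^ 2) + (d - c) ^ 2 * ∫ r in c..d, w r ^ 2 * v' r ^ 2 :=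
  calc m ^ 2 * ((d - c) * v c ^ 2)
      ≤ m ^ 2 * (2 * (∫ r in c..d, v r ^ 2) + (d - c) ^ 2 * ∫ r in c..d, v' r ^ 2) := by
        gcongr; exact sub_mul_sq_left_le_integral hcd hv hv'
    _ = 2 * (m ^ 2 * ∫ r in c..d, v r ^ 2) + (d - c) ^ 2 * (m ^ 2 * ∫ r in c..d, v' r ^ 2) := by
        ring
    _ ≤ _ := by
        gcongr
        · exact sq_mul_integral_sq_le_integral_mul_sq hcd hm hmw hw (HasDerivAt.continuousOn hv)
        · exact sq_mul_integral_sq_le_integral_mul_sq hcd hm hmw hw hv'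

end IntervalForms

lemma hasDerivAt_comp_div {f : ℝ → ℝ} {f' ε r : ℝ} (hf : HasDerivAt f f' (r / ε)) :
    HasDerivAt (fun r => f (r / ε)) (f' / ε) r :=
  (hf.comp r ((hasDerivAt_id r).div_const ε)).congr_deriv (mul_one_div f' ε)

section Asymptotics

open Set Topology Asymptotics

lemma le_mul_exp_of_mul_le_deriv {u u' : ℝ → ℝ} {α z z₀ : ℝ}
    (hu : ∀ y ≤ z₀, HasDerivAt u (u' y) y) (hle : ∀ y ≤ z₀, α * u y ≤ u' y) (hz : z ≤ z₀) :
    u z ≤ u z₀ * Real.exp (-(α * z₀)) * Real.exp (α * z) := by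
  have hderiv : ∀ y ≤ z₀, HasDerivAt (fun y => u y * Real.exp (-(α * y)))
      ((u' y - α * u y) * Real.exp (-(α * y))) y := fun y hy =>
    ((hu y hy).mul ((hasDerivAt_id y).const_mul α).neg.exp).congr_deriv (by
      simp only [id, mul_one, Pi.neg_apply]; ring)
  have hmono : MonotoneOn (fun y => u y * Real.exp (-(α * y))) (Iic z₀) := by
    refine monotoneOn_of_hasDerivWithinAt_nonneg (convex_Iic z₀) (HasDerivAt.continuousOn hderiv)
      (fun y hy => (hderiv y (mem_Iic.1 (interior_subset hy))).hasDerivWithinAt) fun y hy => ?_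
    exact mul_nonneg (sub_nonneg.2 (hle y (mem_Iic.1 (interior_subset hy)))) (Real.exp_pos _).le
  calc u z = u z * Real.exp (-(α * z)) * Real.exp (α * z) := by
        rw [mul_assoc, ← Real.exp_add, neg_add_cancel, Real.exp_zero, mul_one]
    _ ≤ u z₀ * Real.exp (-(α * z₀)) * Real.exp (α * z) := by
        exact mul_le_mul_of_nonneg_right (hmono hz self_mem_Iic hz) (Real.exp_pos _).le

lemma eventually_mul_sub_le_of_hasDerivAt {F : ℝ → ℝ} {x₀ l α : ℝ} (hF : HasDerivAt F l x₀)
    (hF₀ : F x₀ = 0) (hα : α < l) : ∀ᶠ x in 𝓝[>] x₀, α * (x - x₀) ≤ F x := by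
  have hslope : ∀ᶠ x in 𝓝[>] x₀, α < slope F x₀ x :=
    ((hasDerivWithinAt_iff_tendsto_slope' self_notMem_Ioi).1
      hF.hasDerivWithinAt).eventually_const_lt hα
  filter_upwards [hslope, self_mem_nhdsWithin] with x hx hgt
  rw [slope_def_field, hF₀, sub_zero, lt_div_iff₀ (sub_pos.2 hgt)] at hx
  exact hx.le

lemma isBigO_sub_exp_atBot_of_orbit {F ρ : ℝ → ℝ} {x₀ l α : ℝ} (hF : HasDerivAt F l x₀)
    (hF₀ : F x₀ = 0) (hα : α < l) (hρ : ∀ z, HasDerivAt ρ (F (ρ z)) z) (hgt : ∀ z, x₀ < ρ z)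
    (hbot : Tendsto ρ atBot (𝓝 x₀)) :
    (fun z => ρ z - x₀) =O[atBot] fun z => Real.exp (α * z) := by
  have hbot' : Tendsto ρ atBot (𝓝[>] x₀) :=
    tendsto_nhdsWithin_iff.2 ⟨hbot, .of_forall hgt⟩
  obtain ⟨z₀, hz₀⟩ :=
    eventually_atBot.1 (hbot'.eventually (eventually_mul_sub_le_of_hasDerivAt hF hF₀ hα))
  refine .of_bound ((ρ z₀ - x₀) * Real.exp (-(α * z₀))) ?_
  filter_upwards [eventually_le_atBot z₀] with z hz
  rw [Real.norm_of_nonneg (sub_pos.2 (hgt z)).le, Real.norm_of_nonneg (Real.exp_pos _).le]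
  exact le_mul_exp_of_mul_le_deriv (fun y _ => (hρ y).sub_const x₀) hz₀ hz

lemma tendsto_div_mul_exp_neg_div_nhdsGT_zero (C : ℝ) {α : ℝ} (hα : 0 < α) :
    Tendsto (fun ε => C / ε * Real.exp (-α / ε)) (𝓝[>] 0) (𝓝 0) := by
  have hlim : Tendsto (fun x => x * Real.exp (-α * x)) atTop (𝓝 0) := by
    simpa only [Real.rpow_one] using tendsto_rpow_mul_exp_neg_mul_atTop_nhds_zero 1 α hα
  simpa only [mul_zero, Function.comp_def, ← mul_assoc, ← div_eq_mul_inv] using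
    (hlim.comp tendsto_inv_nhdsGT_zero).const_mul C

end Asymptotics

/-- The right-hand side `F` of the profile equation `ρ₀' = F(ρ₀)`. -/
noncomputable def profileField (a b ρ : ℝ) : ℝ :=
  Real.sqrt 2 / 2 * (ρ ^ 2 - a ^ 2) * (b ^ 2 - ρ ^ 2)

lemma hasDerivAt_profileField (a b p : ℝ) :
    HasDerivAt (profileField a b) (Real.sqrt 2 * p * (a ^ 2 + b ^ 2 - 2 * p ^ 2)) p :=
  ((((hasDerivAt_pow 2 p).sub_const (a ^ 2)).const_mul (Real.sqrt 2 / 2)).mul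
    ((hasDerivAt_pow 2 p).const_sub (b ^ 2))).congr_deriv (by push_cast; ring)

lemma profileField_left (a b : ℝ) : profileField a b a = 0 := by
  rw [profileField, sub_self, mul_zero, zero_mul]

lemma profileField_nonneg {a b p : ℝ} (ha : 0 ≤ a) (hap : a ≤ p) (hpb : p ≤ b) :
    0 ≤ profileField a b p :=
  mul_nonneg (mul_nonneg (by positivity) (sub_nonneg.2 (pow_le_pow_left₀ ha hap 2)))
    (sub_nonneg.2 (pow_le_pow_left₀ (ha.trans hap) hpb 2))

lemma continuous_fB (a b : ℝ) : Continuous (fB a b) := by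
  unfold fB; fun_prop

section Profile

open Set Topology Asymptotics

variable {a b : ℝ} {ρ₀ : ℝ → ℝ}

lemma hasDerivAt_profileField_comp {z : ℝ}
    (hρ : HasDerivAt ρ₀ (profileField a b (ρ₀ z)) z) :
    HasDerivAt (fun z => profileField a b (ρ₀ z)) (fB a b (ρ₀ z) * ρ₀ z) z := by
  refine ((hasDerivAt_profileField a b (ρ₀ z)).comp z hρ).congr_deriv ?_
  have hsqrt : Real.sqrt 2 * Real.sqrt 2 = 2 := Real.mul_self_sqrt zero_le_two
  unfold profileField fB
  linear_combination ρ₀ z * (a ^ 2 + b ^ 2 - 2 * ρ₀ z ^ 2) * (ρ₀ z ^ 2 - a ^ 2) *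
    (b ^ 2 - ρ₀ z ^ 2) / 2 * hsqrt

lemma isBigO_mul_profileField_exp_atBot {α : ℝ}
    (hα : α < Real.sqrt 2 * (b ^ 2 - a ^ 2) * a)
    (hρ : ∀ z, HasDerivAt ρ₀ (profileField a b (ρ₀ z)) z) (hgt : ∀ z, a < ρ₀ z)
    (hbot : Tendsto ρ₀ atBot (𝓝 a)) :
    (fun z => ρ₀ z * profileField a b (ρ₀ z)) =O[atBot] fun z => Real.exp (α * z) := by
  have hdecay : (fun z => ρ₀ z - a) =O[atBot] fun z => Real.exp (α * z) :=
    isBigO_sub_exp_atBot_of_orbit (hasDerivAt_profileField a b a) (profileField_left a b)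
      (hα.trans_eq (by ring)) hρ hgt hbot
  have hfield : (fun z => profileField a b (ρ₀ z)) =O[atBot] fun z => ρ₀ z - a := by
    simpa only [profileField_left, sub_zero, Function.comp_def] using
      (hasDerivAt_profileField a b a).isBigO_sub.comp_tendsto hbot
  simpa only [one_mul] using (hbot.isBigO_one ℝ).mul (hfield.trans hdecay)

lemma Q1_mul_eq_integral_add_boundary {ε : ℝ} {v : ℝ → ℝ}
    (hρ : ∀ z, HasDerivAt ρ₀ (profileField a b (ρ₀ z)) z) (hv : ContDiff ℝ 1 v) :
    Q1 a b ε ρ₀ (fun r => ρ₀ (r / ε) * v r) (deriv (fun r => ρ₀ (r / ε) * v r)) =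
      (∫ r in (-1 : ℝ)..1, ρ₀ (r / ε) ^ 2 * deriv v r ^ 2)
        + (ρ₀ (1 / ε) * (profileField a b (ρ₀ (1 / ε)) / ε) * v 1 ^ 2
          - ρ₀ (-1 / ε) * (profileField a b (ρ₀ (-1 / ε)) / ε) * v (-1) ^ 2) := by
  have hθ (r : ℝ) : HasDerivAt (fun r => ρ₀ (r / ε)) (profileField a b (ρ₀ (r / ε)) / ε) r :=
    hasDerivAt_comp_div (hρ (r / ε))
  have hθ' (r : ℝ) : HasDerivAt (fun r => profileField a b (ρ₀ (r / ε)) / ε)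
      ((ε ^ 2)⁻¹ * fB a b (ρ₀ (r / ε)) * ρ₀ (r / ε)) r :=
    ((hasDerivAt_comp_div (hasDerivAt_profileField_comp (hρ (r / ε)))).div_const ε).congr_deriv
      (by ring)
  have hv₁ (r : ℝ) : HasDerivAt v (deriv v r) r := (hv.differentiable one_ne_zero r).hasDerivAt
  have hρc : Continuous ρ₀ := continuous_iff_continuousAt.2 fun z => (hρ z).continuousAt
  have hfB := continuous_fB a b
  have hV : Continuous fun r => (ε ^ 2)⁻¹ * fB a b (ρ₀ (r / ε)) := by fun_prop
  have hderiv : deriv (fun r => ρ₀ (r / ε) * v r) =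
      fun r => profileField a b (ρ₀ (r / ε)) / ε * v r + ρ₀ (r / ε) * deriv v r :=
    funext fun r => ((hθ r).mul (hv₁ r)).deriv
  rw [Q1, hderiv]
  exact integral_deriv_mul_sq_add_potential (fun r _ => hθ r) (fun r _ => hθ' r)
    (fun r _ => hv₁ r) hV.continuousOn (hv.continuous_deriv le_rfl).continuousOn

lemma le_Q1_mul {ε κ : ℝ} {v : ℝ → ℝ} (ha : 0 ≤ a) (hε : 0 ≤ ε) (hκ : 0 ≤ κ)
    (hρ : ∀ z, HasDerivAt ρ₀ (profileField a b (ρ₀ z)) z) (hbnd : ∀ z, a < ρ₀ z ∧ ρ₀ z < b)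
    (hflux : ρ₀ (-1 / ε) * (profileField a b (ρ₀ (-1 / ε)) / ε) ≤ κ * a ^ 2)
    (hv : ContDiff ℝ 1 v) :
    (1 - 2 * κ) * (∫ r in (-1 : ℝ)..1, ρ₀ (r / ε) ^ 2 * deriv v r ^ 2)
        - κ * (∫ r in (-1 : ℝ)..1, ρ₀ (r / ε) ^ 2 * v r ^ 2) ≤
      Q1 a b ε ρ₀ (fun r => ρ₀ (r / ε) * v r) (deriv (fun r => ρ₀ (r / ε) * v r)) := by
  have hright : 0 ≤ ρ₀ (1 / ε) * (profileField a b (ρ₀ (1 / ε)) / ε) * v 1 ^ 2 :=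
    have ⟨hap, hpb⟩ := hbnd (1 / ε)
    mul_nonneg (mul_nonneg (ha.trans hap.le)
      (div_nonneg (profileField_nonneg ha hap.le hpb.le) hε)) (sq_nonneg _)
  have hρc : Continuous ρ₀ := continuous_iff_continuousAt.2 fun z => (hρ z).continuousAt
  have htrace : a ^ 2 * ((1 - -1) * v (-1) ^ 2) ≤
      2 * (∫ r in (-1 : ℝ)..1, ρ₀ (r / ε) ^ 2 * v r ^ 2)
        + (1 - -1) ^ 2 * ∫ r in (-1 : ℝ)..1, ρ₀ (r / ε) ^ 2 * deriv v r ^ 2 :=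
    sq_mul_sub_mul_sq_left_le_integral (w := fun r => ρ₀ (r / ε)) (by norm_num) ha
      (fun r _ => (hbnd (r / ε)).1.le) (by fun_prop)
      (fun r _ => (hv.differentiable one_ne_zero r).hasDerivAt)
      (hv.continuous_deriv le_rfl).continuousOn
  have hleft := mul_le_mul_of_nonneg_right hflux (sq_nonneg (v (-1)))
  rw [Q1_mul_eq_integral_add_boundary hρ hv]
  linarith [mul_le_mul_of_nonneg_left htrace hκ]

lemma exists_eventually_mul_profileField_div_le {α : ℝ} (ha : 0 < a)
    (hα : α < Real.sqrt 2 * (b ^ 2 - a ^ 2) * a)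
    (hρ : ∀ z, HasDerivAt ρ₀ (profileField a b (ρ₀ z)) z) (hgt : ∀ z, a < ρ₀ z)
    (hbot : Tendsto ρ₀ atBot (𝓝 a)) :
    ∃ C > 0, ∀ᶠ ε in 𝓝[>] 0, ρ₀ (-1 / ε) * (profileField a b (ρ₀ (-1 / ε)) / ε) ≤
      C / ε * Real.exp (-α / ε) * a ^ 2 := by
  obtain ⟨K, hK, hbound⟩ :=
    (isBigO_mul_profileField_exp_atBot hα hρ hgt hbot).exists_pos
  have hz : Tendsto (fun ε : ℝ => -1 / ε) (𝓝[>] 0) atBot := by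
    simpa only [neg_div, one_div, Function.comp_def] using
      tendsto_neg_atTop_atBot.comp tendsto_inv_nhdsGT_zero
  refine ⟨K / a ^ 2, by positivity, ?_⟩
  filter_upwards [hz.eventually hbound.bound, self_mem_nhdsWithin] with ε hε hpos
  rw [Real.norm_of_nonneg (Real.exp_pos _).le, mul_div_assoc', mul_neg_one] at hε
  calc ρ₀ (-1 / ε) * (profileField a b (ρ₀ (-1 / ε)) / ε)
      = ρ₀ (-1 / ε) * profileField a b (ρ₀ (-1 / ε)) / ε := by ring
    _ ≤ K * Real.exp (-α / ε) / ε :=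
        div_le_div_of_nonneg_right ((Real.le_norm_self _).trans hε) (mem_Ioi.1 hpos).le
    _ = K / a ^ 2 / ε * Real.exp (-α / ε) * a ^ 2 := by field_simp

end Profile

theorem statement16_general {a b α : ℝ} (ha : 0 < a) (hα : 0 < α)
    (hα' : α < Real.sqrt 2 * (b ^ 2 - a ^ 2) * a) {ρ₀ : ℝ → ℝ}
    (hρ : ∀ z, HasDerivAt ρ₀ (profileField a b (ρ₀ z)) z)
    (hbnd : ∀ z, a < ρ₀ z ∧ ρ₀ z < b) (hbot : Tendsto ρ₀ atBot (nhds a)) :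
    ∃ C > 0, ∀ ν < 1, ∃ ε₀ > 0, ∀ ε ∈ Set.Ioo 0 ε₀, ∀ v : ℝ → ℝ, ContDiff ℝ 1 v →
      Q1 a b ε ρ₀ (fun r => ρ₀ (r / ε) * v r) (deriv (fun r => ρ₀ (r / ε) * v r)) ≥
        ν * (∫ r in (-1 : ℝ)..1, ρ₀ (r / ε) ^ 2 * deriv v r ^ 2)
          - C / ε * Real.exp (-α / ε) * ∫ r in (-1 : ℝ)..1, ρ₀ (r / ε) ^ 2 * v r ^ 2 := by
  obtain ⟨C, hC, hflux⟩ := exists_eventually_mul_profileField_div_le ha hα' hρ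
    (fun z => (hbnd z).1) hbot
  refine ⟨C, hC, fun ν hν => ?_⟩
  have hsmall := (tendsto_div_mul_exp_neg_div_nhdsGT_zero C hα).eventually_le_const
    (show 0 < (1 - ν) / 2 by linarith)
  obtain ⟨ε₀, hε₀, hsub⟩ := mem_nhdsGT_iff_exists_Ioo_subset.1 (hflux.and hsmall)
  refine ⟨ε₀, hε₀, fun ε hε v hv => ?_⟩
  obtain ⟨hfluxε, hsmallε⟩ := hsub hε
  have hεpos : 0 < ε := hε.1
  refine (sub_le_sub_right (mul_le_mul_of_nonneg_right (by linarith) ?_) _).trans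
    (le_Q1_mul ha.le hεpos.le (by positivity) hρ hbnd hfluxε hv)
  exact intervalIntegral.integral_nonneg (by norm_num) fun r _ => by positivity

/-- For every `ν₀ ∈ (0, 1)` there exist `ε₀, C(ν₀) > 0` such that for all
`ε ∈ (0, ε₀)` and every `C¹` function `b̄₁`, with `b₁ = θ_{2,ε} b̄₁` (`θ_{2,ε}(r) = ρ₀(r/ε)`),
`Q₁(b₁) ≥ (ν₀/2) ∫ θ_{2,ε}² (b̄₁')² − (C(ν₀)/ε) e^{−α/ε} ∫ θ_{2,ε}² b̄₁²`. -/
theorem statement16 (a b α : ℝ) (ha : 0 < a) (hab : a < b)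
    (hα : 0 < α)
    (hα' : α < min (Real.sqrt 2 * (b ^ 2 - a ^ 2) * a) (Real.sqrt 2 * (b ^ 2 - a ^ 2) * b))
    (ρ₀ : ℝ → ℝ) (hreg : ContDiff ℝ 1 ρ₀)
    (hderiv : ∀ z, deriv ρ₀ z =
      Real.sqrt 2 / 2 * ((ρ₀ z) ^ 2 - a ^ 2) * (b ^ 2 - (ρ₀ z) ^ 2))
    (hbnd : ∀ z, a < ρ₀ z ∧ ρ₀ z < b)
    (hbot : Filter.Tendsto ρ₀ Filter.atBot (nhds a))
    (htop : Filter.Tendsto ρ₀ Filter.atTop (nhds b))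
    (hnorm : b * Real.log ((ρ₀ 0 - a) / (ρ₀ 0 + a))
      - a * Real.log ((b - ρ₀ 0) / (b + ρ₀ 0)) = 0)
    (ν₀ : ℝ) (hν₀ : ν₀ ∈ Set.Ioo (0:ℝ) 1) :
    ∃ ε₀ > (0:ℝ), ∃ C > (0:ℝ), ∀ ε ∈ Set.Ioo (0:ℝ) ε₀,
      ∀ b₁bar : ℝ → ℝ, ContDiff ℝ 1 b₁bar →
        Q1 a b ε ρ₀ (fun r => ρ₀ (r / ε) * b₁bar r)
            (deriv (fun r => ρ₀ (r / ε) * b₁bar r)) ≥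
          (ν₀ / 2) * (∫ r in (-1:ℝ)..1, (ρ₀ (r / ε)) ^ 2 * (deriv b₁bar r) ^ 2)
            - (C / ε) * Real.exp (-α / ε)
              * (∫ r in (-1:ℝ)..1, (ρ₀ (r / ε)) ^ 2 * (b₁bar r) ^ 2) := by
  obtain ⟨C, hC, hbound⟩ := statement16_general ha hα (hα'.trans_le (min_le_left _ _))
    (fun z => (hreg.differentiable one_ne_zero z).hasDerivAt.congr_deriv (hderiv z)) hbnd hbot
  obtain ⟨ε₀, hε₀, hQ1⟩ := hbound (ν₀ / 2) (by linarith [hν₀.2])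
  exact ⟨ε₀, hε₀, C, hC, hQ1⟩
end

section
/- For every ν₀ > 0 there exist ε₀ > 0 and C(ν₀) > 0 such that for all ε ∈ (0, ε₀) and every u ∈ H¹([−1,1]) one has ‖u‖²_{L^∞([−1,1])} ≤ ν₀ Q₁(u) + C(ν₀) ∫_{−1}^{1} u(r)² dr. -/
open Filter MeasureTheory

/-!
The profile `ρ₀` satisfies `ρ₀'' = f_B(ρ₀) ρ₀`, so `θ(r) = ρ₀(r/ε)` is a positive zero mode of the
operator `-∂² + ε⁻² f_B(θ)` behind `Q₁`, and Jacobi's substitution `u = θ v` gives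
`Q₁(u) = ∫ (θ v')² + [(θ'/θ) u²]`. As `a ≤ θ ≤ b`, the one-dimensional Sobolev inequality for `v`
bounds `u²` by a small multiple of `∫ (θ v')²` plus a multiple of `∫ u²`, uniformly in `ε`. The
boundary term at `1` has the good sign. The one at `-1` is at most `a⁻¹ ε⁻¹ ρ₀'(-1/ε) u(-1)²`, and
`ε⁻¹ ρ₀'(-1/ε) → 0` because `ρ₀` is convex and convergent near `-∞`; it is absorbed by applying the
estimate at `-1`.
-/

section

open Set
open scoped Topology Interval

lemma abs_mul_add_mul_le {η : ℝ} (hη : 0 < η) (p q : ℝ) :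
    |p * q + q * p| ≤ η * p ^ 2 + η⁻¹ * q ^ 2 := by
  have hpos := two_mul_le_add_mul_sq (a := p) (b := q) hη
  have hneg := two_mul_le_add_mul_sq (a := -p) (b := q) hη
  rw [neg_sq] at hneg
  exact abs_le.2 ⟨by linarith, by linarith⟩

/-- `u` is in `W^{1,1}` of the interval between `l` and `r`, with weak derivative `g`. Membership in
`H¹` is this together with integrability of `g ^ 2`. The condition constrains `u` pointwise on the
closed interval, so `u` is the absolutely continuous representative of its class. -/
structure HasWeakDerivOn (u g : ℝ → ℝ) (l r : ℝ) : Prop where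
  intervalIntegrable : IntervalIntegrable g volume l r
  eq_add_integral : ∀ x ∈ [[l, r]], u x = u l + ∫ t in l..x, g t

namespace HasWeakDerivOn

variable {u g u₁ g₁ u₂ g₂ : ℝ → ℝ} {l r x y η : ℝ}

lemma of_hasDerivAt (hu : ∀ x ∈ [[l, r]], HasDerivAt u (g x) x)
    (hg : IntervalIntegrable g volume l r) : HasWeakDerivOn u g l r where
  intervalIntegrable := hg
  eq_add_integral x hx := by
    have hsub : [[l, x]] ⊆ [[l, r]] := uIcc_subset_uIcc_left hx
    rw [intervalIntegral.integral_eq_sub_of_hasDerivAt (fun t ht ↦ hu t (hsub ht))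
      (hg.mono_set hsub)]
    ring

lemma integral_eq_sub (h : HasWeakDerivOn u g l r) (hx : x ∈ [[l, r]]) (hy : y ∈ [[l, r]]) :
    ∫ t in x..y, g t = u y - u x := by
  rw [h.eq_add_integral x hx, h.eq_add_integral y hy, ← intervalIntegral.integral_interval_sub_left
    (h.intervalIntegrable.mono_set (uIcc_subset_uIcc_left hy))
    (h.intervalIntegrable.mono_set (uIcc_subset_uIcc_left hx))]
  ring

lemma absolutelyContinuousOnInterval_primitive (h : HasWeakDerivOn u g l r) :
    AbsolutelyContinuousOnInterval (fun x ↦ u l + ∫ t in l..x, g t) l r :=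
  contDiff_const.contDiffOn.absolutelyContinuousOnInterval.add
    (h.intervalIntegrable.absolutelyContinuousOnInterval_intervalIntegral left_mem_uIcc)

lemma continuousOn (h : HasWeakDerivOn u g l r) : ContinuousOn u [[l, r]] :=
  h.absolutelyContinuousOnInterval_primitive.continuousOn.congr h.eq_add_integral

lemma mul (h₁ : HasWeakDerivOn u₁ g₁ l r) (h₂ : HasWeakDerivOn u₂ g₂ l r) :
    HasWeakDerivOn (fun x ↦ u₁ x * u₂ x) (fun x ↦ g₁ x * u₂ x + u₁ x * g₂ x) l r where
  intervalIntegrable := (h₁.intervalIntegrable.mul_continuousOn h₂.continuousOn).add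
    (h₂.intervalIntegrable.continuousOn_mul h₁.continuousOn)
  eq_add_integral x hx := by
    have hsub : [[l, x]] ⊆ [[l, r]] := uIcc_subset_uIcc_left hx
    have hftc := ((h₁.absolutelyContinuousOnInterval_primitive.mul
      h₂.absolutelyContinuousOnInterval_primitive).mono hsub).integral_deriv_eq_sub
    simp only [Pi.mul_apply, ← h₁.eq_add_integral x hx, ← h₂.eq_add_integral x hx,
      ← h₁.eq_add_integral l left_mem_uIcc, ← h₂.eq_add_integral l left_mem_uIcc] at hftc
    rw [← sub_eq_iff_eq_add', ← hftc]
    refine intervalIntegral.integral_congr_ae ?_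
    filter_upwards [h₁.intervalIntegrable.ae_hasDerivAt_integral,
      h₂.intervalIntegrable.ae_hasDerivAt_integral] with t ht₁ ht₂ ht
    have ht' := hsub (uIoc_subset_uIcc ht)
    rw [(((ht₁ ht' l left_mem_uIcc).const_add (u₁ l)).mul
      ((ht₂ ht' l left_mem_uIcc).const_add (u₂ l))).deriv,
      ← h₁.eq_add_integral t ht', ← h₂.eq_add_integral t ht']

lemma intervalIntegrable_sq (h : HasWeakDerivOn u g l r) :
    IntervalIntegrable (fun s ↦ u s ^ 2) volume l r :=
  (h.continuousOn.pow 2).intervalIntegrable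

lemma sq_le_sq_add (h : HasWeakDerivOn u g l r) (hlr : l ≤ r)
    (hg : IntervalIntegrable (fun s ↦ g s ^ 2) volume l r) (hη : 0 < η)
    (hx : x ∈ Icc l r) (hy : y ∈ Icc l r) :
    u x ^ 2 ≤ u y ^ 2 + (η * (∫ s in l..r, g s ^ 2) + η⁻¹ * ∫ s in l..r, u s ^ 2) := by
  rw [← uIcc_of_le hlr] at hx hy
  have hsub : [[y, x]] ⊆ [[l, r]] := uIcc_subset_uIcc hy hx
  have hgη := hg.const_mul η
  have huη := h.intervalIntegrable_sq.const_mul η⁻¹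
  have hnonneg (s : ℝ) : 0 ≤ η * g s ^ 2 + η⁻¹ * u s ^ 2 := by positivity
  have hdiff : u x ^ 2 - u y ^ 2 ≤ ∫ s in l..r, (η * g s ^ 2 + η⁻¹ * u s ^ 2) := calc
    u x ^ 2 - u y ^ 2 = ∫ s in y..x, (g s * u s + u s * g s) := by
      rw [(h.mul h).integral_eq_sub hy hx, sq, sq]
    _ ≤ |∫ s in y..x, (η * g s ^ 2 + η⁻¹ * u s ^ 2)| :=
      (Real.le_norm_self _).trans <| intervalIntegral.norm_integral_le_abs_of_norm_le
        (ae_of_all _ fun s ↦ abs_mul_add_mul_le hη _ _) ((hgη.add huη).mono_set hsub)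
    _ ≤ |∫ s in l..r, (η * g s ^ 2 + η⁻¹ * u s ^ 2)| :=
      intervalIntegral.abs_integral_mono_interval (uIoc_subset_uIoc_of_uIcc_subset_uIcc hsub)
        (ae_of_all _ hnonneg) (hgη.add huη)
    _ = _ := abs_of_nonneg (intervalIntegral.integral_nonneg_of_forall hlr hnonneg)
  rw [intervalIntegral.integral_add hgη huη, intervalIntegral.integral_const_mul,
    intervalIntegral.integral_const_mul] at hdiff
  linarith

lemma sq_le_integral (h : HasWeakDerivOn u g l r) (hlr : l < r)
    (hg : IntervalIntegrable (fun s ↦ g s ^ 2) volume l r) (hη : 0 < η) (hx : x ∈ Icc l r) :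
    u x ^ 2 ≤ η * (∫ s in l..r, g s ^ 2) + (η⁻¹ + (r - l)⁻¹) * ∫ s in l..r, u s ^ 2 := by
  have hu := h.intervalIntegrable_sq
  have hlen : 0 < r - l := sub_pos.2 hlr
  have havg := intervalIntegral.integral_mono_on hlr.le (intervalIntegrable_const (c := u x ^ 2))
    (hu.add intervalIntegrable_const) (fun y hy ↦ h.sq_le_sq_add hlr.le hg hη hx hy)
  rw [intervalIntegral.integral_add hu intervalIntegrable_const, intervalIntegral.integral_const,
    intervalIntegral.integral_const, smul_eq_mul, smul_eq_mul] at havg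
  refine le_of_mul_le_mul_left (havg.trans_eq ?_) hlen
  field_simp
  ring

end HasWeakDerivOn

lemma intervalIntegrable_sub_sq {g φ : ℝ → ℝ} {l r : ℝ} (hg : IntervalIntegrable g volume l r)
    (hg2 : IntervalIntegrable (fun s ↦ g s ^ 2) volume l r) (hφ : ContinuousOn φ [[l, r]]) :
    IntervalIntegrable (fun s ↦ (g s - φ s) ^ 2) volume l r :=
  ((hg2.sub ((hg.mul_continuousOn hφ).const_mul 2)).add (hφ.pow 2).intervalIntegrable).congr
    fun s _ ↦ by simp only [Pi.pow_apply]; ring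

lemma integral_div_sq_le {p θ : ℝ → ℝ} {l r a : ℝ} (hlr : l ≤ r) (ha : 0 < a)
    (hθ : ContinuousOn θ [[l, r]]) (haθ : ∀ s ∈ Icc l r, a ≤ θ s)
    (hp : IntervalIntegrable (fun s ↦ p s ^ 2) volume l r) :
    IntervalIntegrable (fun s ↦ (p s / θ s) ^ 2) volume l r ∧
      ∫ s in l..r, (p s / θ s) ^ 2 ≤ (a ^ 2)⁻¹ * ∫ s in l..r, p s ^ 2 := by
  have hθ0 : ∀ s ∈ [[l, r]], θ s ^ 2 ≠ 0 := fun s hs ↦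
    (pow_pos (ha.trans_le (haθ s (uIcc_of_le hlr ▸ hs))) 2).ne'
  have hint : IntervalIntegrable (fun s ↦ (p s / θ s) ^ 2) volume l r :=
    (hp.mul_continuousOn ((hθ.pow 2).inv₀ hθ0)).congr fun s _ ↦ by
      simp only [Pi.inv_apply, Pi.pow_apply, div_pow, ← div_eq_mul_inv]
  refine ⟨hint, ?_⟩
  rw [← intervalIntegral.integral_const_mul]
  refine intervalIntegral.integral_mono_on hlr hint (hp.const_mul _) fun s hs ↦ ?_
  have := haθ s hs
  rw [div_pow, div_eq_inv_mul]
  gcongr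

section PositiveSolution

variable {θ θ' θ'' u g : ℝ → ℝ} {a b l r ν η x : ℝ}

lemma hasWeakDerivOn_logDeriv (hθ : ∀ s ∈ [[l, r]], HasDerivAt θ (θ' s) s)
    (hθ' : ∀ s ∈ [[l, r]], HasDerivAt θ' (θ'' s) s) (hθ'' : ContinuousOn θ'' [[l, r]])
    (hθ0 : ∀ s ∈ [[l, r]], θ s ≠ 0) :
    HasWeakDerivOn (fun s ↦ θ' s / θ s) (fun s ↦ θ'' s / θ s - (θ' s / θ s) ^ 2) l r := by
  have hθc : ContinuousOn θ [[l, r]] := HasDerivAt.continuousOn hθ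
  have hθ'c : ContinuousOn θ' [[l, r]] := HasDerivAt.continuousOn hθ'
  refine .of_hasDerivAt (fun s hs ↦ ?_)
    ((hθ''.div hθc hθ0).sub ((hθ'c.div hθc hθ0).pow 2)).intervalIntegrable
  have := hθ0 s hs
  exact ((hθ' s hs).div (hθ s hs) this).congr_deriv (by field_simp)

lemma integral_sq_add_mul_sq_eq (hθ : ∀ s ∈ [[l, r]], HasDerivAt θ (θ' s) s)
    (hθ' : ∀ s ∈ [[l, r]], HasDerivAt θ' (θ'' s) s) (hθ'' : ContinuousOn θ'' [[l, r]])
    (hθ0 : ∀ s ∈ [[l, r]], θ s ≠ 0) (hu : HasWeakDerivOn u g l r)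
    (hg : IntervalIntegrable (fun s ↦ g s ^ 2) volume l r) :
    ∫ s in l..r, (g s ^ 2 + θ'' s / θ s * u s ^ 2) =
      (∫ s in l..r, (g s - θ' s / θ s * u s) ^ 2) +
        (θ' r / θ r * u r ^ 2 - θ' l / θ l * u l ^ 2) := by
  have hlog := hasWeakDerivOn_logDeriv hθ hθ' hθ'' hθ0
  have hlogu := hlog.mul (hu.mul hu)
  have hsq : IntervalIntegrable (fun s ↦ (g s - θ' s / θ s * u s) ^ 2) volume l r :=
    intervalIntegrable_sub_sq hu.intervalIntegrable hg (hlog.continuousOn.mul hu.continuousOn)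
  rw [sq (u r), sq (u l), ← hlogu.integral_eq_sub left_mem_uIcc right_mem_uIcc,
    ← intervalIntegral.integral_add hsq hlogu.intervalIntegrable]
  refine intervalIntegral.integral_congr fun s _ ↦ ?_
  ring

lemma hasWeakDerivOn_div (hθ : ∀ s ∈ [[l, r]], HasDerivAt θ (θ' s) s)
    (hθ' : ContinuousOn θ' [[l, r]]) (hθ0 : ∀ s ∈ [[l, r]], θ s ≠ 0)
    (hu : HasWeakDerivOn u g l r) :
    HasWeakDerivOn (fun s ↦ u s / θ s) (fun s ↦ (g s - θ' s / θ s * u s) / θ s) l r := by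
  have hθc : ContinuousOn θ [[l, r]] := HasDerivAt.continuousOn hθ
  have hinv : HasWeakDerivOn (fun s ↦ (θ s)⁻¹) (fun s ↦ -θ' s / θ s ^ 2) l r :=
    .of_hasDerivAt (fun s hs ↦ (hθ s hs).inv (hθ0 s hs))
      (hθ'.neg.div (hθc.pow 2) fun s hs ↦ pow_ne_zero 2 (hθ0 s hs)).intervalIntegrable
  convert hu.mul hinv using 2 with s <;> ring

lemma sq_le_integral_sub_logDeriv_mul (hlr : l < r) (ha : 0 < a) (hη : 0 < η)
    (hθ : ∀ s ∈ [[l, r]], HasDerivAt θ (θ' s) s) (hθ' : ContinuousOn θ' [[l, r]])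
    (haθ : ∀ s ∈ Icc l r, a ≤ θ s) (hθb : ∀ s ∈ Icc l r, θ s ≤ b)
    (hu : HasWeakDerivOn u g l r) (hg : IntervalIntegrable (fun s ↦ g s ^ 2) volume l r)
    (hx : x ∈ Icc l r) :
    u x ^ 2 ≤ b ^ 2 / a ^ 2 * (η * (∫ s in l..r, (g s - θ' s / θ s * u s) ^ 2) +
      (η⁻¹ + (r - l)⁻¹) * ∫ s in l..r, u s ^ 2) := by
  have hθc : ContinuousOn θ [[l, r]] := HasDerivAt.continuousOn hθ
  have hθ0 : ∀ s ∈ [[l, r]], θ s ≠ 0 := fun s hs ↦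
    (ha.trans_le (haθ s (uIcc_of_le hlr.le ▸ hs))).ne'
  have : 0 < r - l := sub_pos.2 hlr
  obtain ⟨hvint, hvle⟩ := integral_div_sq_le hlr.le ha hθc haθ <|
    intervalIntegrable_sub_sq hu.intervalIntegrable hg ((hθ'.div hθc hθ0).mul hu.continuousOn)
  have hule := (integral_div_sq_le hlr.le ha hθc haθ hu.intervalIntegrable_sq).2
  have hv := (hasWeakDerivOn_div hθ hθ' hθ0 hu).sq_le_integral hlr hvint hη hx
  have hθx : 0 < θ x := ha.trans_le (haθ x hx)
  calc u x ^ 2 = θ x ^ 2 * (u x / θ x) ^ 2 := by field_simp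
    _ ≤ b ^ 2 * (u x / θ x) ^ 2 := by
      gcongr
      exact hθb x hx
    _ ≤ b ^ 2 * (η * ((a ^ 2)⁻¹ * ∫ s in l..r, (g s - θ' s / θ s * u s) ^ 2) +
          (η⁻¹ + (r - l)⁻¹) * ((a ^ 2)⁻¹ * ∫ s in l..r, u s ^ 2)) := by
      gcongr
      exact hv.trans (by gcongr; exact hvle)
    _ = _ := by ring

theorem sq_le_integral_sq_add_mul_sq (hlr : l < r) (ha : 0 < a) (hν : 0 < ν)
    (hθ : ∀ s ∈ [[l, r]], HasDerivAt θ (θ' s) s) (hθ' : ∀ s ∈ [[l, r]], HasDerivAt θ' (θ'' s) s)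
    (hθ'' : ContinuousOn θ'' [[l, r]])
    (haθ : ∀ s ∈ Icc l r, a ≤ θ s) (hθb : ∀ s ∈ Icc l r, θ s ≤ b)
    (hleft : ν * (θ' l / θ l) ≤ 1) (hright : 0 ≤ θ' r / θ r)
    (hu : HasWeakDerivOn u g l r) (hg : IntervalIntegrable (fun s ↦ g s ^ 2) volume l r)
    (hx : x ∈ Icc l r) :
    u x ^ 2 ≤ ν * (∫ s in l..r, (g s ^ 2 + θ'' s / θ s * u s ^ 2)) +
      2 * (b ^ 2 / a ^ 2) * (2 * b ^ 2 / (ν * a ^ 2) + (r - l)⁻¹) * ∫ s in l..r, u s ^ 2 := by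
  have hθ0 : ∀ s ∈ [[l, r]], θ s ≠ 0 := fun s hs ↦
    (ha.trans_le (haθ s (uIcc_of_le hlr.le ▸ hs))).ne'
  have hl : l ∈ Icc l r := left_mem_Icc.2 hlr.le
  have hb : 0 < b := ha.trans_le ((haθ l hl).trans (hθb l hl))
  have hident := integral_sq_add_mul_sq_eq hθ hθ' hθ'' hθ0 hu hg
  set D := ∫ s in l..r, (g s - θ' s / θ s * u s) ^ 2
  set I := ∫ s in l..r, u s ^ 2
  set K := b ^ 2 / a ^ 2 * (2 * b ^ 2 / (ν * a ^ 2) + (r - l)⁻¹)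
  have hsup : ∀ y ∈ Icc l r, u y ^ 2 ≤ ν / 2 * D + K * I := fun y hy ↦ by
    refine (sq_le_integral_sub_logDeriv_mul hlr ha (η := ν * a ^ 2 / (2 * b ^ 2)) (by positivity)
      hθ (HasDerivAt.continuousOn hθ') haθ hθb hu hg hy).trans_eq ?_
    simp only [D, I, K, inv_div]
    field_simp
  have hD : ν * D ≤ ν * (∫ s in l..r, (g s ^ 2 + θ'' s / θ s * u s ^ 2)) + u l ^ 2 := by
    have := mul_le_mul_of_nonneg_right hleft (sq_nonneg (u l))
    have := mul_nonneg hν.le (mul_nonneg hright (sq_nonneg (u r)))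
    rw [hident]
    linarith
  have := hsup l hl
  have := hsup x hx
  linarith

end PositiveSolution

lemma tendsto_mul_deriv_atBot_of_convexOn {f f' : ℝ → ℝ} {c Z : ℝ} (hf : ConvexOn ℝ (Iic Z) f)
    (hf' : ∀ z ∈ Iic Z, HasDerivAt f (f' z) z) (hc : Tendsto f atBot (𝓝 c)) :
    Tendsto (fun z ↦ z * f' z) atBot (𝓝 0) := by
  have hhalf : Tendsto (fun z : ℝ ↦ z / 2) atBot atBot := tendsto_id.atBot_div_const two_pos
  have hdouble : Tendsto (fun z : ℝ ↦ 2 * z) atBot atBot := tendsto_id.const_mul_atBot two_pos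
  have hlower : Tendsto (fun z ↦ 2 * (f z - f (z / 2))) atBot (𝓝 0) := by
    simpa only [sub_self, mul_zero, Function.comp_apply] using (hc.sub (hc.comp hhalf)).const_mul 2
  have hupper : Tendsto (fun z ↦ f (2 * z) - f z) atBot (𝓝 0) := by
    simpa only [sub_self, Function.comp_apply] using (hc.comp hdouble).sub hc
  refine tendsto_of_tendsto_of_tendsto_of_le_of_le' hlower hupper ?_ ?_
  · filter_upwards [eventually_lt_atBot 0, eventually_le_atBot Z,
      hhalf.eventually (eventually_le_atBot Z)] with z hz hzZ hzZ'
    have hslope := hf.le_slope_of_hasDerivAt hzZ hzZ' (by linarith) (hf' z hzZ)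
    rw [slope_def_field, le_div_iff₀ (by linarith)] at hslope
    linarith
  · filter_upwards [eventually_lt_atBot 0, eventually_le_atBot Z] with z hz hzZ
    have hslope := hf.slope_le_of_hasDerivAt (x := 2 * z) (mem_Iic.2 (by linarith)) hzZ
      (by linarith) (hf' z hzZ)
    rw [slope_def_field, div_le_iff₀ (by linarith)] at hslope
    linarith

lemma tendsto_inv_mul_deriv_div_of_convexOn {f f' : ℝ → ℝ} {c l Z : ℝ} (hl : l < 0)
    (hf : ConvexOn ℝ (Iic Z) f) (hf' : ∀ z ∈ Iic Z, HasDerivAt f (f' z) z)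
    (hc : Tendsto f atBot (𝓝 c)) :
    Tendsto (fun ε ↦ ε⁻¹ * f' (l / ε)) (𝓝[>] 0) (𝓝 0) := by
  have hz : Tendsto (fun ε ↦ l / ε) (𝓝[>] 0) atBot :=
    (tendsto_inv_nhdsGT_zero.const_mul_atTop_of_neg hl).congr fun ε ↦ (div_eq_mul_inv l ε).symm
  have := ((tendsto_mul_deriv_atBot_of_convexOn hf hf' hc).comp hz).const_mul l⁻¹
  rw [mul_zero] at this
  refine this.congr fun ε ↦ ?_
  simp only [Function.comp_apply]
  field_simp [hl.ne]

theorem exists_eventually_sq_le_of_profile {ρ ρ' ρ'' : ℝ → ℝ} {a b c l r ν Z : ℝ}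
    (hl : l < 0) (hlr : l < r) (ha : 0 < a) (hν : 0 < ν)
    (hρ : ∀ z, HasDerivAt ρ (ρ' z) z) (hρ' : ∀ z, HasDerivAt ρ' (ρ'' z) z) (hρ'' : Continuous ρ'')
    (haρ : ∀ z, a ≤ ρ z) (hρb : ∀ z, ρ z ≤ b) (hρ'0 : ∀ z, 0 ≤ ρ' z)
    (hconv : ConvexOn ℝ (Iic Z) ρ) (hc : Tendsto ρ atBot (𝓝 c)) :
    ∃ C > 0, ∀ᶠ ε in 𝓝[>] (0 : ℝ), ∀ u g : ℝ → ℝ, HasWeakDerivOn u g l r →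
      IntervalIntegrable (fun s ↦ g s ^ 2) volume l r → ∀ x ∈ Icc l r,
        u x ^ 2 ≤ ν * (∫ s in l..r, (g s ^ 2 + (ε ^ 2)⁻¹ * (ρ'' (s / ε) / ρ (s / ε)) * u s ^ 2)) +
          C * ∫ s in l..r, u s ^ 2 := by
  have hb : 0 < b := ha.trans_le ((haρ 0).trans (hρb 0))
  have : 0 < r - l := sub_pos.2 hlr
  have hρpos : ∀ z, 0 < ρ z := fun z ↦ ha.trans_le (haρ z)
  have hdecay := tendsto_inv_mul_deriv_div_of_convexOn hl hconv (fun z _ ↦ hρ z) hc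
  refine ⟨2 * (b ^ 2 / a ^ 2) * (2 * b ^ 2 / (ν * a ^ 2) + (r - l)⁻¹), by positivity, ?_⟩
  filter_upwards [self_mem_nhdsWithin, hdecay.eventually_le_const (div_pos ha hν)]
    with ε (hε : 0 < ε) hdecayε u g hu hg x hx
  have hscale (s : ℝ) : HasDerivAt (fun s ↦ s / ε) ε⁻¹ s := by
    simpa only [one_div] using (hasDerivAt_id' s).div_const ε
  have hθ (s : ℝ) : HasDerivAt (fun s ↦ ρ (s / ε)) (ε⁻¹ * ρ' (s / ε)) s :=
    ((hρ _).comp s (hscale s)).congr_deriv (mul_comm _ _)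
  have hθ' (s : ℝ) : HasDerivAt (fun s ↦ ε⁻¹ * ρ' (s / ε)) ((ε ^ 2)⁻¹ * ρ'' (s / ε)) s :=
    (((hρ' _).comp s (hscale s)).const_mul ε⁻¹).congr_deriv (by ring)
  have hleft : ν * (ε⁻¹ * ρ' (l / ε) / ρ (l / ε)) ≤ 1 := by
    rw [← mul_div_assoc, div_le_one (hρpos _)]
    exact ((le_div_iff₀' hν).1 hdecayε).trans (haρ _)
  have hright : 0 ≤ ε⁻¹ * ρ' (r / ε) / ρ (r / ε) :=
    div_nonneg (mul_nonneg (inv_nonneg.2 hε.le) (hρ'0 _)) (hρpos _).le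
  simpa only [mul_div_assoc] using sq_le_integral_sq_add_mul_sq hlr ha hν (fun s _ ↦ hθ s)
    (fun s _ ↦ hθ' s) (by fun_prop) (fun s _ ↦ haρ _) (fun s _ ↦ hρb _) hleft hright hu hg hx

/-- The right-hand side of the profile equation `ρ' = profileSpeed a b ρ`. -/
noncomputable def profileSpeed (a b ρ : ℝ) : ℝ :=
  Real.sqrt 2 / 2 * (ρ ^ 2 - a ^ 2) * (b ^ 2 - ρ ^ 2)

section Profile

variable {a b : ℝ} {ρ : ℝ → ℝ}

lemma profileSpeed_nonneg {t : ℝ} (ha : 0 ≤ a) (hat : a ≤ t) (htb : t ≤ b) :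
    0 ≤ profileSpeed a b t := by
  have : 0 ≤ t ^ 2 - a ^ 2 := sub_nonneg.2 (by gcongr)
  have : 0 ≤ b ^ 2 - t ^ 2 := sub_nonneg.2 (by gcongr; linarith)
  unfold profileSpeed
  positivity

lemma hasDerivAt_profileSpeed_comp {z : ℝ} (hρ : HasDerivAt ρ (profileSpeed a b (ρ z)) z) :
    HasDerivAt (fun z ↦ profileSpeed a b (ρ z)) (fB a b (ρ z) * ρ z) z := by
  refine ((((hρ.pow 2).sub_const (a ^ 2)).const_mul (Real.sqrt 2 / 2)).mul
    ((hρ.pow 2).const_sub (b ^ 2))).congr_deriv ?_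
  have hsqrt : Real.sqrt 2 ^ 2 = 2 := Real.sq_sqrt zero_le_two
  simp only [profileSpeed, fB, Pi.pow_apply]
  linear_combination (ρ z * (ρ z ^ 2 - a ^ 2) * (b ^ 2 - ρ z ^ 2) *
    (a ^ 2 + b ^ 2 - 2 * ρ z ^ 2) / 2) * hsqrt

lemma fB_nonneg {t : ℝ} (ha : 0 ≤ a) (hat : a ≤ t) (htb : t ≤ b)
    (ht : 2 * t ^ 2 ≤ a ^ 2 + b ^ 2) : 0 ≤ fB a b t := by
  have hat2 : a ^ 2 ≤ t ^ 2 := by gcongr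
  have htb2 : t ^ 2 ≤ b ^ 2 := by gcongr; linarith
  exact mul_nonneg_of_nonpos_of_nonpos
    (mul_nonpos_of_nonneg_of_nonpos (sub_nonneg.2 hat2) (sub_nonpos.2 htb2)) (by linarith)

lemma exists_convexOn_Iic_profile (ha : 0 ≤ a) (hab : a < b)
    (hρ : ∀ z, HasDerivAt ρ (profileSpeed a b (ρ z)) z) (haρ : ∀ z, a ≤ ρ z) (hρb : ∀ z, ρ z ≤ b)
    (hbot : Tendsto ρ atBot (𝓝 a)) : ∃ Z, ConvexOn ℝ (Iic Z) ρ := by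
  have hlim : 2 * a ^ 2 < a ^ 2 + b ^ 2 := by
    have : a ^ 2 < b ^ 2 := by gcongr
    linarith
  obtain ⟨Z, hZ⟩ := eventually_atBot.1 (((hbot.pow 2).const_mul 2).eventually_lt_const hlim)
  refine ⟨Z, convexOn_of_hasDerivWithinAt2_nonneg (convex_Iic Z)
    (HasDerivAt.continuousOn fun z _ ↦ hρ z) (fun z _ ↦ (hρ z).hasDerivWithinAt)
    (fun z _ ↦ (hasDerivAt_profileSpeed_comp (hρ z)).hasDerivWithinAt) fun z hz ↦ ?_⟩
  exact mul_nonneg (fB_nonneg ha (haρ z) (hρb z) (hZ z (interior_subset (s := Iic Z) hz)).le)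
    (ha.trans (haρ z))

end Profile

end

theorem statement17_general {a b : ℝ} (ha : 0 < a) (hab : a < b) {ρ : ℝ → ℝ}
    (hρ : ∀ z, HasDerivAt ρ (profileSpeed a b (ρ z)) z)
    (hbnd : ∀ z, a < ρ z ∧ ρ z < b) (hbot : Tendsto ρ atBot (nhds a))
    {ν : ℝ} (hν : 0 < ν) :
    ∃ ε₀ > (0 : ℝ), ∃ C > (0 : ℝ), ∀ ε ∈ Set.Ioo (0 : ℝ) ε₀, ∀ u g : ℝ → ℝ,
      IntervalIntegrable g volume (-1) 1 →
      IntervalIntegrable (fun r ↦ g r ^ 2) volume (-1) 1 →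
      (∀ x ∈ Set.Icc (-1 : ℝ) 1, u x = u (-1) + ∫ t in (-1 : ℝ)..x, g t) →
      ∀ x ∈ Set.Icc (-1 : ℝ) 1,
        u x ^ 2 ≤ ν * Q1 a b ε ρ u g + C * ∫ r in (-1 : ℝ)..1, u r ^ 2 := by
  have haρ (z : ℝ) : a ≤ ρ z := (hbnd z).1.le
  have hρb (z : ℝ) : ρ z ≤ b := (hbnd z).2.le
  have hρ0 (z : ℝ) : ρ z ≠ 0 := (ha.trans (hbnd z).1).ne'
  have hρc : Continuous ρ := continuous_iff_continuousAt.2 fun z ↦ (hρ z).continuousAt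
  obtain ⟨Z, hconv⟩ := exists_convexOn_Iic_profile ha.le hab hρ haρ hρb hbot
  obtain ⟨C, hC, hev⟩ := exists_eventually_sq_le_of_profile (l := -1) (r := 1) (by norm_num)
    (by norm_num) ha hν hρ (fun z ↦ hasDerivAt_profileSpeed_comp (hρ z))
    (by unfold fB; fun_prop) haρ hρb (fun z ↦ profileSpeed_nonneg ha.le (haρ z) (hρb z)) hconv hbot
  obtain ⟨ε₀, hε₀, hsub⟩ := mem_nhdsGT_iff_exists_Ioo_subset.1 hev
  refine ⟨ε₀, hε₀, C, hC, fun ε hε u g hg hg2 hu x hx ↦ ?_⟩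
  have hweak : HasWeakDerivOn u g (-1) 1 := ⟨hg, by rwa [Set.uIcc_of_le (by norm_num)]⟩
  simpa only [Q1, mul_div_cancel_right₀ _ (hρ0 _)] using hsub hε u g hweak hg2 x hx

/-- For every `ν₀ > 0` there exist `ε₀, C(ν₀) > 0` such that for all
`ε ∈ (0, ε₀)` and every `u ∈ H¹([−1,1])` (i.e. `u` absolutely continuous with derivative
`g ∈ L²([−1,1])`), one has `‖u‖²_{L^∞([−1,1])} ≤ ν₀ Q₁(u) + C(ν₀) ∫_{−1}^{1} u²`. -/
theorem statement17 (a b α : ℝ) (ha : 0 < a) (hab : a < b)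
    (hα : 0 < α)
    (hα' : α < min (Real.sqrt 2 * (b ^ 2 - a ^ 2) * a) (Real.sqrt 2 * (b ^ 2 - a ^ 2) * b))
    (ρ₀ : ℝ → ℝ) (hreg : ContDiff ℝ 1 ρ₀)
    (hderiv : ∀ z, deriv ρ₀ z =
      Real.sqrt 2 / 2 * ((ρ₀ z) ^ 2 - a ^ 2) * (b ^ 2 - (ρ₀ z) ^ 2))
    (hbnd : ∀ z, a < ρ₀ z ∧ ρ₀ z < b)
    (hbot : Filter.Tendsto ρ₀ Filter.atBot (nhds a))
    (htop : Filter.Tendsto ρ₀ Filter.atTop (nhds b))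
    (hnorm : b * Real.log ((ρ₀ 0 - a) / (ρ₀ 0 + a))
      - a * Real.log ((b - ρ₀ 0) / (b + ρ₀ 0)) = 0)
    (ν₀ : ℝ) (hν₀ : 0 < ν₀) :
    ∃ ε₀ > (0:ℝ), ∃ C > (0:ℝ), ∀ ε ∈ Set.Ioo (0:ℝ) ε₀, ∀ u g : ℝ → ℝ,
      IntervalIntegrable g volume (-1) 1 →
      IntervalIntegrable (fun r => (g r) ^ 2) volume (-1) 1 →
      (∀ x ∈ Set.Icc (-1:ℝ) 1, u x = u (-1) + ∫ t in (-1:ℝ)..x, g t) →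
      ∀ x ∈ Set.Icc (-1:ℝ) 1,
        (u x) ^ 2 ≤ ν₀ * Q1 a b ε ρ₀ u g + C * ∫ r in (-1:ℝ)..1, (u r) ^ 2 :=
  statement17_general ha hab (fun z ↦ (hreg.differentiable one_ne_zero z).hasDerivAt.congr_deriv
    (hderiv z)) hbnd hbot hν₀
end

section
/- There exist ε₀ > 0 and C > 0 such that for all ε ∈ (0, ε₀) and every u ∈ H¹([−1,1]) one has u(1)² + u(−1)² ≤ C ε ( Q₀(u) + ∫_{−1}^{1} u(r)² dr ). -/
open Filter MeasureTheory

/-- `f_A(ρ) = (ρ² − a²)(ρ² − b²)(2ρ² − a² − b²) + 2((2ρ² − a² − b²)² + 2(ρ² − a²)(ρ² − b²))ρ²`. -/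
noncomputable def fA (a b ρ : ℝ) : ℝ :=
  (ρ ^ 2 - a ^ 2) * (ρ ^ 2 - b ^ 2) * (2 * ρ ^ 2 - a ^ 2 - b ^ 2)
    + 2 * ((2 * ρ ^ 2 - a ^ 2 - b ^ 2) ^ 2
        + 2 * (ρ ^ 2 - a ^ 2) * (ρ ^ 2 - b ^ 2)) * ρ ^ 2

/-- The quadratic form `Q₀(u) = ∫_{−1}^{1} (u'(r)² + ε⁻² f_A(ρ₀(r/ε)) u(r)²) dr`, written for
a function `u` with (weak) derivative `g`. -/
noncomputable def Q0 (a b ε : ℝ) (ρ₀ u g : ℝ → ℝ) : ℝ :=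
  ∫ r in (-1:ℝ)..1, ((g r) ^ 2 + (ε ^ 2)⁻¹ * fA a b (ρ₀ (r / ε)) * (u r) ^ 2)

/-!
If `w' + w² ≤ V`, then `(w u²)' = w' u² + 2 w u u' ≤ u'² + V u²`, so the energy with potential `V`
dominates the boundary terms of `w u²`. Here the potential is `V = ω' + ω²` along the profile, where
`ω = ρ₀'' / ρ₀'`. The function `ω` itself is useless at the ends, because it tends to a negative
limit `-k` at `+∞` and to a positive limit `l` at `-∞`. Adding `(3/2) k e^{k (z - x) / 4}` near
`z = x`, and subtracting the mirror image `(3/2) l e^{l (-z - x) / 4}` near `z = -x`, reverses both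
signs. On `[-x, x]` this raises `w' + w²` by at most `x⁻²`: wherever the correction is not
exponentially small, `ω` is so close to its limit that the correction lowers `w' + w²`. At
`x = ε⁻¹` the rescaled error is `1`, which is what the extra term `∫ u²` pays for.
-/

open Topology

/-- The left-hand side `w' + w²` of the Riccati equation associated with `-y'' + V y = 0`
(where `w = y' / y`); subsolutions of `w' + w² = V` bound the energy with potential `V` below. -/
noncomputable def riccati (w : ℝ → ℝ) (z : ℝ) : ℝ :=
  deriv w z + w z ^ 2

lemma riccati_rescale (w : ℝ → ℝ) (ε r : ℝ) :
    riccati (fun r ↦ ε⁻¹ * w (ε⁻¹ * r)) r = (ε ^ 2)⁻¹ * riccati w (ε⁻¹ * r) := by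
  simp only [riccati, deriv_const_mul_field', deriv_comp_mul_left, smul_eq_mul]
  ring

lemma exists_abs_le_of_tendsto_atTop_atBot {f : ℝ → ℝ} {c d : ℝ} (hf : Continuous f)
    (htop : Tendsto f atTop (𝓝 c)) (hbot : Tendsto f atBot (𝓝 d)) : ∃ M, ∀ z, |f z| ≤ M := by
  obtain ⟨M, hM⟩ := (hf.isBounded_range_iff_isBigO_atTop_atBot.mpr
    ⟨htop.isBigO_one ℝ, hbot.isBigO_one ℝ⟩).exists_norm_le
  exact ⟨M, fun z ↦ hM _ ⟨z, rfl⟩⟩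

lemma absolutelyContinuousOnInterval_congr {f f' : ℝ → ℝ} {p q : ℝ}
    (hf : AbsolutelyContinuousOnInterval f p q) (h : Set.EqOn f f' (Set.uIcc p q)) :
    AbsolutelyContinuousOnInterval f' p q := by
  refine Tendsto.congr' ?_ hf
  filter_upwards [mem_inf_of_right (mem_principal_self _)] with E hE
  refine Finset.sum_congr rfl fun i hi ↦ ?_
  rw [h (hE.1 i hi).1, h (hE.1 i hi).2]

/-- `u` belongs to `H¹` of the interval between `p` and `q`, with weak derivative `g`. The notion is
encoded through the absolutely continuous representative of `u`. -/
structure HasL2WeakDerivOn (u g : ℝ → ℝ) (p q : ℝ) : Prop where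
  integrable : IntervalIntegrable g volume p q
  integrable_sq : IntervalIntegrable (fun r ↦ g r ^ 2) volume p q
  eq_integral : ∀ x ∈ Set.uIcc p q, u x = u p + ∫ t in p..x, g t

namespace HasL2WeakDerivOn

variable {u g V W : ℝ → ℝ} {p q : ℝ}

lemma absolutelyContinuous (hu : HasL2WeakDerivOn u g p q) :
    AbsolutelyContinuousOnInterval u p q := by
  have hconst : AbsolutelyContinuousOnInterval (fun _ ↦ u p) p q :=
    contDiffOn_const.absolutelyContinuousOnInterval
  have hprimitive := hu.integrable.absolutelyContinuousOnInterval_intervalIntegral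
    (c := p) Set.left_mem_uIcc
  exact absolutelyContinuousOnInterval_congr (hconst.add hprimitive)
    fun x hx ↦ (hu.eq_integral x hx).symm

lemma ae_hasDerivAt (hu : HasL2WeakDerivOn u g p q) :
    ∀ᵐ x, x ∈ Set.Ioo p q → HasDerivAt u (g x) x := by
  filter_upwards [hu.integrable.ae_hasDerivAt_integral] with x hderiv hx
  have hprimitive := (hderiv (Set.Icc_subset_uIcc (Set.Ioo_subset_Icc_self hx)) p
    Set.left_mem_uIcc).const_add (u p)
  refine hprimitive.congr_of_eventuallyEq ?_
  filter_upwards [Ioo_mem_nhds hx.1 hx.2] with y hy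
  exact hu.eq_integral y (Set.Icc_subset_uIcc (Set.Ioo_subset_Icc_self hy))

lemma intervalIntegrable_energy (hu : HasL2WeakDerivOn u g p q)
    (hV : IntervalIntegrable V volume p q) :
    IntervalIntegrable (fun r ↦ g r ^ 2 + V r * u r ^ 2) volume p q :=
  hu.integrable_sq.add (hV.mul_continuousOn (hu.absolutelyContinuous.continuousOn.pow 2))

lemma boundary_le_integral_energy (hu : HasL2WeakDerivOn u g p q) (hpq : p ≤ q)
    (hW : AbsolutelyContinuousOnInterval W p q) (hV : IntervalIntegrable V volume p q)
    (hWV : ∀ᵐ x, x ∈ Set.Ioo p q → riccati W x ≤ V x) :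
    W q * u q ^ 2 - W p * u p ^ 2 ≤ ∫ r in p..q, (g r ^ 2 + V r * u r ^ 2) := by
  have hac : AbsolutelyContinuousOnInterval (W * (u * u)) p q :=
    hW.mul (hu.absolutelyContinuous.mul hu.absolutelyContinuous)
  calc W q * u q ^ 2 - W p * u p ^ 2 = ∫ r in p..q, deriv (W * (u * u)) r := by
        rw [hac.integral_deriv_eq_sub]
        simp only [Pi.mul_apply]
        ring
    _ ≤ ∫ r in p..q, (g r ^ 2 + V r * u r ^ 2) := by
        refine intervalIntegral.integral_mono_ae_restrict hpq hac.intervalIntegrable_deriv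
          (hu.intervalIntegrable_energy hV) ?_
        rw [EventuallyLE, ← Measure.restrict_congr_set Ioo_ae_eq_Icc,
          ae_restrict_iff' measurableSet_Ioo]
        filter_upwards [hW.ae_differentiableAt, hu.ae_hasDerivAt, hWV] with x hWx hux hWVx hx
        have hW' := (hWx (Set.Icc_subset_uIcc (Set.Ioo_subset_Icc_self hx))).hasDerivAt
        have hriccati := mul_le_mul_of_nonneg_right (hWVx hx) (sq_nonneg (u x))
        rw [(hW'.mul ((hux hx).mul (hux hx))).deriv]
        simp only [Pi.mul_apply]
        unfold riccati at hriccati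
        linarith [sq_nonneg (g x - W x * u x)]

end HasL2WeakDerivOn

/-- The form `∫_{-1}^{1} (u'² + ε⁻² V(r/ε) u²) dr` for `u` with weak derivative `g`; `Q0` is the
case `V = f_A ∘ ρ₀`. -/
noncomputable def scaledEnergy (V : ℝ → ℝ) (ε : ℝ) (u g : ℝ → ℝ) : ℝ :=
  ∫ r in (-1 : ℝ)..1, (g r ^ 2 + (ε ^ 2)⁻¹ * V (r / ε) * u r ^ 2)

lemma HasL2WeakDerivOn.sq_endpoints_le_scaledEnergy {u g V w : ℝ → ℝ} {ε c : ℝ}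
    (hu : HasL2WeakDerivOn u g (-1) 1) (hε : 0 < ε) (hV : Continuous V) (hw : ContDiff ℝ 1 w)
    (hwV : ∀ z ∈ Set.Icc (-ε⁻¹) ε⁻¹, riccati w z ≤ V z + ε ^ 2)
    (hright : c ≤ w ε⁻¹) (hleft : w (-ε⁻¹) ≤ -c) :
    c * (u 1 ^ 2 + u (-1) ^ 2) ≤
      ε * (scaledEnergy V ε u g + ∫ r in (-1 : ℝ)..1, u r ^ 2) := by
  have hpot : Continuous fun r ↦ (ε ^ 2)⁻¹ * V (r / ε) := by fun_prop
  have hu_sq : IntervalIntegrable (fun r ↦ u r ^ 2) volume (-1) 1 :=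
    (hu.absolutelyContinuous.continuousOn.pow 2).intervalIntegrable
  have hsub : ∀ r ∈ Set.Ioo (-1 : ℝ) 1,
      riccati (fun r ↦ ε⁻¹ * w (ε⁻¹ * r)) r ≤ (ε ^ 2)⁻¹ * V (r / ε) + 1 := by
    intro r hr
    have hεinv : 0 < ε⁻¹ := inv_pos.mpr hε
    have hmem : ε⁻¹ * r ∈ Set.Icc (-ε⁻¹) ε⁻¹ := ⟨by nlinarith [hr.1], by nlinarith [hr.2]⟩
    calc riccati (fun r ↦ ε⁻¹ * w (ε⁻¹ * r)) r = (ε ^ 2)⁻¹ * riccati w (ε⁻¹ * r) :=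
          riccati_rescale w ε r
      _ ≤ (ε ^ 2)⁻¹ * (V (ε⁻¹ * r) + ε ^ 2) := by gcongr; exact hwV _ hmem
      _ = (ε ^ 2)⁻¹ * V (r / ε) + 1 := by rw [div_eq_inv_mul]; field_simp
  have henergy : scaledEnergy V ε u g + ∫ r in (-1 : ℝ)..1, u r ^ 2 =
      ∫ r in (-1 : ℝ)..1, (g r ^ 2 + ((ε ^ 2)⁻¹ * V (r / ε) + 1) * u r ^ 2) := by
    rw [scaledEnergy, ← intervalIntegral.integral_add
      (hu.intervalIntegrable_energy (hpot.intervalIntegrable _ _)) hu_sq]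
    exact intervalIntegral.integral_congr fun r _ ↦ by ring
  have hboundary := hu.boundary_le_integral_energy (by norm_num)
    (W := fun r ↦ ε⁻¹ * w (ε⁻¹ * r)) (V := fun r ↦ (ε ^ 2)⁻¹ * V (r / ε) + 1)
    (ContDiff.contDiffOn (by fun_prop)).absolutelyContinuousOnInterval
    ((hpot.add continuous_const).intervalIntegrable _ _) (.of_forall hsub)
  rw [← henergy, mul_one, mul_neg_one] at hboundary
  calc c * (u 1 ^ 2 + u (-1) ^ 2) = c * u 1 ^ 2 - -c * u (-1) ^ 2 := by ring
    _ ≤ w ε⁻¹ * u 1 ^ 2 - w (-ε⁻¹) * u (-1) ^ 2 := by gcongr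
    _ = ε * (ε⁻¹ * w ε⁻¹ * u 1 ^ 2 - ε⁻¹ * w (-ε⁻¹) * u (-1) ^ 2) := by field_simp
    _ ≤ ε * (scaledEnergy V ε u g + ∫ r in (-1 : ℝ)..1, u r ^ 2) := by gcongr

/-- The correction added to a Riccati subsolution with limit `-k` at `+∞` to make it positive at
`x`. The height `3k/2` outweighs the limit, and the rate `k/4` is small enough for the correction to
decrease `w' + w²` where the subsolution is close to its limit. -/
noncomputable def boundaryLayer (k x z : ℝ) : ℝ :=
  3 / 2 * k * Real.exp (k / 4 * (z - x))

section boundaryLayer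

variable {k : ℝ}

lemma boundaryLayer_self (k x : ℝ) : boundaryLayer k x x = 3 / 2 * k := by
  simp [boundaryLayer]

lemma boundaryLayer_pos (hk : 0 < k) (x z : ℝ) : 0 < boundaryLayer k x z := by
  unfold boundaryLayer
  positivity

lemma boundaryLayer_le (hk : 0 < k) {x z : ℝ} (hz : z ≤ x) : boundaryLayer k x z ≤ 3 / 2 * k :=
  mul_le_of_le_one_right (by positivity)
    (Real.exp_le_one_iff.mpr (mul_nonpos_of_nonneg_of_nonpos (by positivity) (sub_nonpos.mpr hz)))

lemma contDiff_boundaryLayer (k x : ℝ) : ContDiff ℝ 1 (boundaryLayer k x) := by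
  unfold boundaryLayer
  fun_prop

lemma hasDerivAt_boundaryLayer (k x z : ℝ) :
    HasDerivAt (boundaryLayer k x) (k / 4 * boundaryLayer k x z) z := by
  have h := ((((hasDerivAt_id z).sub_const x).const_mul (k / 4)).exp).const_mul (3 / 2 * k)
  refine h.congr_deriv ?_
  simp only [boundaryLayer, id]
  ring

lemma tendsto_boundaryLayer_neg (hk : 0 < k) :
    Tendsto (fun x ↦ boundaryLayer k x (-x)) atTop (𝓝 0) := by
  have hexponent : Tendsto (fun x : ℝ ↦ k / 4 * (-x - x)) atTop atBot :=
    (tendsto_neg_atTop_atBot.atBot_add_atBot tendsto_neg_atTop_atBot).const_mul_atBot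
      (by positivity)
  simpa [boundaryLayer] using
    (Real.tendsto_exp_atBot.comp hexponent).const_mul (3 / 2 * k)

lemma eventually_mul_exp_neg_le_inv_sq {s : ℝ} (hs : 0 < s) (C : ℝ) :
    ∀ᶠ x in atTop, C * Real.exp (-s * x) ≤ (x ^ 2)⁻¹ := by
  have hlim : Tendsto (fun x : ℝ ↦ C * (x ^ 2 * Real.exp (-s * x))) atTop (𝓝 0) := by
    simpa using (tendsto_rpow_mul_exp_neg_mul_atTop_nhds_zero 2 s hs).const_mul C
  filter_upwards [hlim.eventually_le_const one_pos, eventually_gt_atTop 0] with x hx hx0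
  rw [← one_div, le_div_iff₀ (by positivity)]
  linarith

lemma eventually_boundaryLayer_mul_le {ω : ℝ → ℝ} {M : ℝ} (hk : 0 < k) (hM : ∀ z, ω z ≤ M)
    (hω : Tendsto ω atTop (𝓝 (-k))) :
    ∀ᶠ x in atTop, ∀ z ≤ x,
      boundaryLayer k x z * (k / 4 + 2 * ω z + boundaryLayer k x z) ≤ (x ^ 2)⁻¹ / 2 := by
  obtain ⟨R, hR⟩ := eventually_atTop.mp
    (hω.eventually_le_const (show -k < -(7 / 8 * k) by linarith))
  set B := k / 4 + 2 * |M| + 3 / 2 * k with hB_def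
  have hB : 0 ≤ B := by positivity
  filter_upwards [eventually_mul_exp_neg_le_inv_sq (show 0 < k / 4 by positivity)
    (2 * (3 / 2 * k * Real.exp (k / 4 * R) * B))] with x hx z hz
  have hpos := boundaryLayer_pos hk x z
  have hle := boundaryLayer_le hk hz
  rcases le_total R z with hRz | hzR
  · have hfactor : k / 4 + 2 * ω z + boundaryLayer k x z ≤ 0 := by linarith [hR z hRz]
    exact (mul_nonpos_of_nonneg_of_nonpos hpos.le hfactor).trans (by positivity)
  · have hfactor : k / 4 + 2 * ω z + boundaryLayer k x z ≤ B := by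
      linarith [hM z, le_abs_self M]
    calc boundaryLayer k x z * (k / 4 + 2 * ω z + boundaryLayer k x z)
        ≤ boundaryLayer k x z * B := by gcongr
      _ ≤ 3 / 2 * k * Real.exp (k / 4 * (R - x)) * B :=
          mul_le_mul_of_nonneg_right (by unfold boundaryLayer; gcongr) hB
      _ = 3 / 2 * k * Real.exp (k / 4 * R) * B * Real.exp (-(k / 4) * x) := by
          rw [show k / 4 * (R - x) = k / 4 * R + -(k / 4) * x by ring, Real.exp_add]
          ring
      _ ≤ (x ^ 2)⁻¹ / 2 := by linarith

end boundaryLayer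

/-- The function `ω` with boundary layers at both ends of `[-x, x]`: it is positive at `x` and
negative at `-x` when `ω` has limits `-k < 0` at `+∞` and `l > 0` at `-∞` and `x` is large. -/
noncomputable def layeredSubsolution (ω : ℝ → ℝ) (k l x z : ℝ) : ℝ :=
  ω z + boundaryLayer k x z - boundaryLayer l x (-z)

section layeredSubsolution

variable {ω : ℝ → ℝ} {k l : ℝ}

lemma contDiff_layeredSubsolution (hω : ContDiff ℝ 1 ω) (k l x : ℝ) :
    ContDiff ℝ 1 (layeredSubsolution ω k l x) :=
  (hω.add (contDiff_boundaryLayer k x)).sub ((contDiff_boundaryLayer l x).comp contDiff_neg)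

lemma riccati_layeredSubsolution {z : ℝ} (hω : DifferentiableAt ℝ ω z) (k l x : ℝ) :
    riccati (layeredSubsolution ω k l x) z = riccati ω z
      + boundaryLayer k x z * (k / 4 + 2 * ω z + boundaryLayer k x z)
      + boundaryLayer l x (-z) * (l / 4 + 2 * -ω z + boundaryLayer l x (-z))
      - 2 * (boundaryLayer k x z * boundaryLayer l x (-z)) := by
  have hderiv : HasDerivAt (layeredSubsolution ω k l x)
      (deriv ω z + k / 4 * boundaryLayer k x z - l / 4 * boundaryLayer l x (-z) * -1) z :=
    (hω.hasDerivAt.add (hasDerivAt_boundaryLayer k x z)).sub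
      ((hasDerivAt_boundaryLayer l x (-z)).comp z (hasDerivAt_neg z))
  rw [riccati, riccati, hderiv.deriv, layeredSubsolution]
  ring

lemma eventually_riccati_layeredSubsolution_le (hk : 0 < k) (hl : 0 < l) (hω : ContDiff ℝ 1 ω)
    (htop : Tendsto ω atTop (𝓝 (-k))) (hbot : Tendsto ω atBot (𝓝 l)) :
    ∀ᶠ x in atTop, ∀ z ∈ Set.Icc (-x) x,
      riccati (layeredSubsolution ω k l x) z ≤ riccati ω z + (x ^ 2)⁻¹ := by
  obtain ⟨M, hM⟩ := exists_abs_le_of_tendsto_atTop_atBot hω.continuous htop hbot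
  filter_upwards [
    eventually_boundaryLayer_mul_le hk (fun z ↦ (le_abs_self _).trans (hM z)) htop,
    eventually_boundaryLayer_mul_le hl (fun z ↦ (neg_le_abs _).trans (hM (-z)))
      (hbot.comp tendsto_neg_atTop_atBot).neg] with x hright hleft z hz
  have hright_z := hright z hz.2
  have hleft_z := hleft (-z) (neg_le.mp hz.1)
  simp only [neg_neg] at hleft_z
  rw [riccati_layeredSubsolution (hω.differentiable one_ne_zero z)]
  linarith [mul_pos (boundaryLayer_pos hk x z) (boundaryLayer_pos hl x (-z))]

lemma tendsto_layeredSubsolution_right (hl : 0 < l) (htop : Tendsto ω atTop (𝓝 (-k))) :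
    Tendsto (fun x ↦ layeredSubsolution ω k l x x) atTop (𝓝 (k / 2)) := by
  simp only [layeredSubsolution, boundaryLayer_self]
  convert (htop.add_const (3 / 2 * k)).sub (tendsto_boundaryLayer_neg hl) using 2
  ring

lemma tendsto_layeredSubsolution_left (hk : 0 < k) (hbot : Tendsto ω atBot (𝓝 l)) :
    Tendsto (fun x ↦ layeredSubsolution ω k l x (-x)) atTop (𝓝 (-(l / 2))) := by
  simp only [layeredSubsolution, neg_neg, boundaryLayer_self]
  have hω_neg : Tendsto (fun x ↦ ω (-x)) atTop (𝓝 l) := hbot.comp tendsto_neg_atTop_atBot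
  convert (hω_neg.add (tendsto_boundaryLayer_neg hk)).sub_const (3 / 2 * l) using 2
  ring

end layeredSubsolution

theorem exists_sq_endpoints_le_scaledEnergy {ω V : ℝ → ℝ} {k l : ℝ} (hk : 0 < k) (hl : 0 < l)
    (hω : ContDiff ℝ 1 ω) (hV : Continuous V) (hωV : ∀ z, riccati ω z ≤ V z)
    (htop : Tendsto ω atTop (𝓝 (-k))) (hbot : Tendsto ω atBot (𝓝 l)) :
    ∃ ε₀ > (0 : ℝ), ∃ C > (0 : ℝ), ∀ ε ∈ Set.Ioo (0 : ℝ) ε₀, ∀ u g : ℝ → ℝ,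
      HasL2WeakDerivOn u g (-1) 1 → u 1 ^ 2 + u (-1) ^ 2 ≤
        C * ε * (scaledEnergy V ε u g + ∫ r in (-1 : ℝ)..1, u r ^ 2) := by
  set c := min k l / 4 with hc_def
  have hc : 0 < c := by positivity
  have hck : c < k / 2 := by linarith [min_le_left k l]
  have hcl : -(l / 2) < -c := by linarith [min_le_right k l]
  have hlarge := (eventually_riccati_layeredSubsolution_le hk hl hω htop hbot).and
    (((tendsto_layeredSubsolution_right hl htop).eventually_const_le hck).and
      ((tendsto_layeredSubsolution_left hk hbot).eventually_le_const hcl))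
  obtain ⟨ε₀, hε₀, hsmall⟩ := mem_nhdsGT_iff_exists_Ioo_subset.mp
    (tendsto_inv_nhdsGT_zero.eventually hlarge)
  refine ⟨ε₀, hε₀, c⁻¹, inv_pos.mpr hc, fun ε hε u g hu ↦ ?_⟩
  obtain ⟨hsub, hright, hleft⟩ := hsmall hε
  rw [mul_assoc, ← div_eq_inv_mul, le_div_iff₀' hc]
  refine hu.sq_endpoints_le_scaledEnergy hε.1 hV (contDiff_layeredSubsolution hω k l ε⁻¹)
    (fun z hz ↦ ?_) hright hleft
  have hsub_z := hsub z hz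
  rw [inv_pow, inv_inv] at hsub_z
  linarith [hωV z]

/-- The logarithmic derivative `ω = ρ₀'' / ρ₀'` of `ρ₀'`, as a function of the value `ρ` of the
profile: since `ρ₀' = F(ρ₀)` with `F(ρ) = (√2/2)(ρ² - a²)(b² - ρ²)`, it is `F'(ρ)`. -/
noncomputable def profileLogDeriv (a b ρ : ℝ) : ℝ :=
  Real.sqrt 2 * ρ * (a ^ 2 + b ^ 2 - 2 * ρ ^ 2)

section profile

variable {a b : ℝ} {ρ₀ : ℝ → ℝ}

lemma contDiff_profileLogDeriv (a b : ℝ) {n : WithTop ℕ∞} :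
    ContDiff ℝ n (profileLogDeriv a b) := by
  unfold profileLogDeriv
  fun_prop

lemma hasDerivAt_profileLogDeriv (a b ρ : ℝ) :
    HasDerivAt (profileLogDeriv a b) (Real.sqrt 2 * (a ^ 2 + b ^ 2 - 6 * ρ ^ 2)) ρ := by
  have h := ((hasDerivAt_id ρ).const_mul (Real.sqrt 2)).mul
    (((hasDerivAt_pow 2 ρ).const_mul 2).const_sub (a ^ 2 + b ^ 2))
  refine h.congr_deriv ?_
  simp only [id]
  ring

lemma riccati_profileLogDeriv {z : ℝ}
    (hρ : HasDerivAt ρ₀ (Real.sqrt 2 / 2 * (ρ₀ z ^ 2 - a ^ 2) * (b ^ 2 - ρ₀ z ^ 2)) z) :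
    riccati (fun z ↦ profileLogDeriv a b (ρ₀ z)) z = fA a b (ρ₀ z) := by
  have hsqrt : Real.sqrt 2 ^ 2 = 2 := Real.sq_sqrt zero_le_two
  have hderiv := ((hasDerivAt_profileLogDeriv a b (ρ₀ z)).comp z hρ).deriv
  rw [riccati, show deriv (fun z ↦ profileLogDeriv a b (ρ₀ z)) z = _ from hderiv,
    profileLogDeriv, fA]
  linear_combination ((6 * ρ₀ z ^ 2 - a ^ 2 - b ^ 2) * (ρ₀ z ^ 2 - a ^ 2) * (ρ₀ z ^ 2 - b ^ 2) / 2
    + ρ₀ z ^ 2 * (2 * ρ₀ z ^ 2 - a ^ 2 - b ^ 2) ^ 2) * hsqrt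

lemma profileLogDeriv_left (a b : ℝ) :
    profileLogDeriv a b a = Real.sqrt 2 * (b ^ 2 - a ^ 2) * a := by
  rw [profileLogDeriv]
  ring

lemma profileLogDeriv_right (a b : ℝ) :
    profileLogDeriv a b b = -(Real.sqrt 2 * (b ^ 2 - a ^ 2) * b) := by
  rw [profileLogDeriv]
  ring

lemma continuous_fA (a b : ℝ) : Continuous (fA a b) := by
  unfold fA
  fun_prop

end profile

theorem statement18_general {a b : ℝ} {ρ₀ : ℝ → ℝ} (ha : 0 < a) (hab : a < b)
    (hreg : ContDiff ℝ 1 ρ₀)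
    (hderiv : ∀ z, deriv ρ₀ z = Real.sqrt 2 / 2 * (ρ₀ z ^ 2 - a ^ 2) * (b ^ 2 - ρ₀ z ^ 2))
    (hbot : Tendsto ρ₀ atBot (𝓝 a)) (htop : Tendsto ρ₀ atTop (𝓝 b)) :
    ∃ ε₀ > (0 : ℝ), ∃ C > (0 : ℝ), ∀ ε ∈ Set.Ioo (0 : ℝ) ε₀, ∀ u g : ℝ → ℝ,
      HasL2WeakDerivOn u g (-1) 1 → u 1 ^ 2 + u (-1) ^ 2 ≤
        C * ε * (Q0 a b ε ρ₀ u g + ∫ r in (-1 : ℝ)..1, u r ^ 2) := by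
  have hρ z : HasDerivAt ρ₀ (Real.sqrt 2 / 2 * (ρ₀ z ^ 2 - a ^ 2) * (b ^ 2 - ρ₀ z ^ 2)) z :=
    hderiv z ▸ (hreg.differentiable one_ne_zero z).hasDerivAt
  have hlim (c : ℝ) : Tendsto (profileLogDeriv a b) (𝓝 c) (𝓝 (profileLogDeriv a b c)) :=
    (contDiff_profileLogDeriv a b (n := 0)).continuous.tendsto c
  have hgap : 0 < b ^ 2 - a ^ 2 := by nlinarith
  have hb_pos : 0 < b := ha.trans hab
  exact exists_sq_endpoints_le_scaledEnergy (k := Real.sqrt 2 * (b ^ 2 - a ^ 2) * b)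
    (l := Real.sqrt 2 * (b ^ 2 - a ^ 2) * a) (by positivity) (by positivity)
    ((contDiff_profileLogDeriv a b).comp hreg) ((continuous_fA a b).comp hreg.continuous)
    (fun z ↦ (riccati_profileLogDeriv (hρ z)).le)
    (profileLogDeriv_right a b ▸ (hlim b).comp htop)
    (profileLogDeriv_left a b ▸ (hlim a).comp hbot)

/-- There exist `ε₀, C > 0` such that for all `ε ∈ (0, ε₀)` and every
`u ∈ H¹([−1,1])` (i.e. `u` absolutely continuous with derivative `g ∈ L²([−1,1])`),
`u(1)² + u(−1)² ≤ C ε (Q₀(u) + ∫_{−1}^{1} u²)`. -/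
theorem statement18 (a b α : ℝ) (ha : 0 < a) (hab : a < b)
    (hα : 0 < α)
    (hα' : α < min (Real.sqrt 2 * (b ^ 2 - a ^ 2) * a) (Real.sqrt 2 * (b ^ 2 - a ^ 2) * b))
    (ρ₀ : ℝ → ℝ) (hreg : ContDiff ℝ 1 ρ₀)
    (hderiv : ∀ z, deriv ρ₀ z =
      Real.sqrt 2 / 2 * ((ρ₀ z) ^ 2 - a ^ 2) * (b ^ 2 - (ρ₀ z) ^ 2))
    (hbnd : ∀ z, a < ρ₀ z ∧ ρ₀ z < b)
    (hbot : Filter.Tendsto ρ₀ Filter.atBot (nhds a))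
    (htop : Filter.Tendsto ρ₀ Filter.atTop (nhds b))
    (hnorm : b * Real.log ((ρ₀ 0 - a) / (ρ₀ 0 + a))
      - a * Real.log ((b - ρ₀ 0) / (b + ρ₀ 0)) = 0) :
    ∃ ε₀ > (0:ℝ), ∃ C > (0:ℝ), ∀ ε ∈ Set.Ioo (0:ℝ) ε₀, ∀ u g : ℝ → ℝ,
      IntervalIntegrable g volume (-1) 1 →
      IntervalIntegrable (fun r => (g r) ^ 2) volume (-1) 1 →
      (∀ x ∈ Set.Icc (-1:ℝ) 1, u x = u (-1) + ∫ t in (-1:ℝ)..x, g t) →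
      (u 1) ^ 2 + (u (-1)) ^ 2 ≤
        C * ε * (Q0 a b ε ρ₀ u g + ∫ r in (-1:ℝ)..1, (u r) ^ 2) := by
  obtain ⟨ε₀, hε₀, C, hC, h⟩ := statement18_general ha hab hreg hderiv hbot htop
  exact ⟨ε₀, hε₀, C, hC, fun ε hε u g hg hg2 hu ↦ h ε hε u g ⟨hg, hg2, by simpa using hu⟩⟩
end
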